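/- arXiv:1607.04848 — 2 statements merged into one kernel-verified Lean document; each statement's English description precedes it below -/
import Mathlib

section
/- Let F be the distribution function of a probability measure on ℝ with quantile function Q. Then there exist sequences a_n > 0 and b_n ∈ ℝ such that F(a_n x + b_n)^n → exp(−e^{−x}) as n → ∞ for every x ∈ ℝ (i.e., F is in the domain of attraction of the Gumbel law) if and only if de Haan's criterion holds: for every choice of x, y, z, w > 0 with y ≠ w, (Q(1−sx) − Q(1−sz))/(Q(1−sy) − Q(1−sw)) → (log x − log z)/(log y − log w) as s ↓ 0. -/
open MeasureTheory Filter Set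

noncomputable section

/-- The distribution function of a measure on `ℝ`. -/
def distFun (μ : Measure ℝ) : ℝ → ℝ := fun x => (μ (Set.Iic x)).toReal

/-- The quantile (left-continuous inverse) function of a distribution function. -/
def quantileFun (F : ℝ → ℝ) : ℝ → ℝ := fun s => sInf {x : ℝ | s ≤ F x}

/-- de Haan's criterion for the Gumbel domain of attraction, in terms of the
quantile function `Q`. -/
def DeHaanGumbel (Q : ℝ → ℝ) : Prop :=
  ∀ x y z w : ℝ, 0 < x → 0 < y → 0 < z → 0 < w → y ≠ w →
    Tendsto (fun s : ℝ => (Q (1 - s * x) - Q (1 - s * z)) / (Q (1 - s * y) - Q (1 - s * w)))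
      (nhdsWithin 0 (Set.Ioi 0))
      (nhds ((Real.log x - Real.log z) / (Real.log y - Real.log w)))

/-- The Lebesgue–Stieltjes measure `dQ` on `(0,1)` associated with the quantile function of
`F`: it coincides with the pushforward of Lebesgue measure under `F`
(for an interval `(a,b] ⊆ (0,1)` it has mass `Q(b+) - Q(a+)`). -/
def dQ (μ : Measure ℝ) : Measure ℝ := Measure.map (distFun μ) volume

/-- `c(s,β) = s^{-β} ∫_{(1-s,1)} (1-u)^β dQ(u)`. -/
def cBeta (μ : Measure ℝ) (s β : ℝ) : ℝ :=
  s ^ (-β) * ∫ u in Set.Ioo (1 - s) 1, (1 - u) ^ β ∂(dQ μ)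

/-- `c(s) = c(s,1) = s⁻¹ ∫_{(1-s,1)} (1-u) dQ(u)`. -/
def cFun (μ : Measure ℝ) (s : ℝ) : ℝ := cBeta μ s 1

/-- `σ²(s) = ∫_{(1-s,1)} ∫_{(1-s,1)} (min(u,v) - uv) dQ(u) dQ(v)`. -/
def sigmaSq (μ : Measure ℝ) (s : ℝ) : ℝ :=
  ∫ v in Set.Ioo (1 - s) 1, (∫ u in Set.Ioo (1 - s) 1, (min u v - u * v) ∂(dQ μ)) ∂(dQ μ)

/-- A function is slowly varying at zero if `L(λ s)/L(s) → 1` as `s ↓ 0` for every `λ > 0`. -/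
def SlowlyVaryingAtZero (L : ℝ → ℝ) : Prop :=
  ∀ lam : ℝ, 0 < lam →
    Tendsto (fun s : ℝ => L (lam * s) / L s) (nhdsWithin 0 (Set.Ioi 0)) (nhds 1)

/-- Condition (K) on the sequence of integers `k n`. -/
def CondK (k : ℕ → ℕ) : Prop :=
  (∀ n : ℕ, 1 ≤ k n ∧ k n ≤ n) ∧ Tendsto k atTop atTop ∧
    Tendsto (fun n : ℕ => (k n : ℝ) / (n : ℝ)) atTop (nhds 0)

/-!
Let `Λ` be the Gumbel distribution function. Passing to inverse functions, the convergence
`F (aₙ x + bₙ) ^ n → Λ x` says that the normalized quantiles `(Q p - bₙ) / aₙ` tend to `t` along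
all levels `p` with `p ^ n → Λ t`. The levels `p = 1 - s x` with `n = ⌊1 / s⌋` correspond to
`t = -log x`, so the condition becomes `(Q (1 - s x) - b s) / a s → -log x` as `s ↓ 0`. De Haan's
criterion is this convergence with the unknown `a` and `b` eliminated by taking ratios of
differences; conversely, it allows `b s = Q (1 - s)` and `a s = Q (1 - s / e) - Q (1 - s)`.
-/

open scoped Topology

section Quantile

variable {F : ℝ → ℝ} {p x : ℝ}

lemma quantileFun_le_of_le_apply (hF : Monotone F) (hp : ∃ y, F y < p) (h : p ≤ F x) :
    quantileFun F p ≤ x := by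
  obtain ⟨y, hy⟩ := hp
  exact csInf_le ⟨y, fun z hz => (hF.reflect_lt (hy.trans_le hz)).le⟩ h

lemma le_quantileFun_of_apply_lt (hF : Monotone F) (hp : ∃ y, p ≤ F y) (h : F x < p) :
    x ≤ quantileFun F p :=
  le_csInf hp fun _ hz => (hF.reflect_lt (h.trans_le hz)).le

lemma quantileFun_monotoneOn (hF : Monotone F) (hF_top : Tendsto F atTop (𝓝 1)) (y : ℝ) :
    MonotoneOn (quantileFun F) (Ioo (F y) 1) := fun _ hp _ hq hpq =>
  le_csInf (hF_top.eventually_const_le hq.2).exists fun _ hz =>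
    quantileFun_le_of_le_apply hF ⟨y, hp.1⟩ (hpq.trans hz)

end Quantile

section InverseConvergence

variable {ι : Type*} {l : Filter ι} {F G : ℝ → ℝ} {a b : ι → ℝ} {n : ι → ℕ}

lemma tendsto_quantileFun_normalized (hF : Monotone F) (hF_nonneg : ∀ x, 0 ≤ F x)
    (hF_lt : ∃ y, F y < 1) (hF_top : Tendsto F atTop (𝓝 1)) (hG : StrictMono G)
    (ha : ∀ i, 0 < a i) (h : ∀ x, Tendsto (fun i => F (a i * x + b i) ^ n i) l (𝓝 (G x)))
    {p : ι → ℝ} {t : ℝ} (hp : Tendsto p l (𝓝[<] 1))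
    (hpn : Tendsto (fun i => p i ^ n i) l (𝓝 (G t))) :
    Tendsto (fun i => (quantileFun F (p i) - b i) / a i) l (𝓝 t) := by
  obtain ⟨y, hy⟩ := hF_lt
  have hp_gt : ∀ᶠ i in l, F y < p i := (hp.mono_right nhdsWithin_le_nhds).eventually_const_lt hy
  have hp_lt : ∀ᶠ i in l, p i < 1 := hp.eventually self_mem_nhdsWithin
  refine tendsto_order.2 ⟨fun c hc => ?_, fun c hc => ?_⟩
  · obtain ⟨u, hcu, hut⟩ := exists_between hc
    filter_upwards [(h u).eventually_lt hpn (hG hut), hp_gt, hp_lt] with i hi hpi hpi'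
    have hF_u_lt : F (a i * u + b i) < p i :=
      lt_of_pow_lt_pow_left₀ _ ((hF_nonneg y).trans hpi.le) hi
    have hle : a i * u + b i ≤ quantileFun F (p i) :=
      le_quantileFun_of_apply_lt hF (hF_top.eventually_const_le hpi').exists hF_u_lt
    refine hcu.trans_le ((le_div_iff₀ (ha i)).2 ?_)
    linarith
  · obtain ⟨u, htu, huc⟩ := exists_between hc
    filter_upwards [hpn.eventually_lt (h u) (hG htu), hp_gt] with i hi hpi
    have hF_u_gt : p i < F (a i * u + b i) := lt_of_pow_lt_pow_left₀ _ (hF_nonneg _) hi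
    have hle : quantileFun F (p i) ≤ a i * u + b i :=
      quantileFun_le_of_le_apply hF ⟨y, hpi⟩ hF_u_gt.le
    refine lt_of_le_of_lt ((div_le_iff₀ (ha i)).2 ?_) huc
    linarith

lemma tendsto_pow_of_tendsto_quantileFun_normalized (hF : Monotone F) (hF_nonneg : ∀ x, 0 ≤ F x)
    (hF_lt : ∃ y, F y < 1) (hF_top : Tendsto F atTop (𝓝 1)) {x : ℝ}
    (hG : ContinuousAt G x) (ha : ∀ i, 0 < a i) {p : ℝ → ι → ℝ}
    (hp : ∀ t, Tendsto (p t) l (𝓝[<] 1))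
    (hpn : ∀ t, Tendsto (fun i => p t i ^ n i) l (𝓝 (G t)))
    (hQ : ∀ t, Tendsto (fun i => (quantileFun F (p t i) - b i) / a i) l (𝓝 t)) :
    Tendsto (fun i => F (a i * x + b i) ^ n i) l (𝓝 (G x)) := by
  obtain ⟨y, hy⟩ := hF_lt
  have hp_gt (t : ℝ) : ∀ᶠ i in l, F y < p t i :=
    ((hp t).mono_right nhdsWithin_le_nhds).eventually_const_lt hy
  have hp_lt (t : ℝ) : ∀ᶠ i in l, p t i < 1 := (hp t).eventually self_mem_nhdsWithin
  refine tendsto_order.2 ⟨fun c hc => ?_, fun c hc => ?_⟩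
  · obtain ⟨t, hct, htx⟩ : ∃ t, c < G t ∧ t < x :=
      ((hG.continuousWithinAt.eventually_const_lt hc).and (self_mem_nhdsWithin (s := Iio x))).exists
    filter_upwards [(hQ t).eventually_lt_const htx, (hpn t).eventually_const_lt hct, hp_gt t,
      hp_lt t] with i hi hci hpi hpi'
    have hQ_lt : quantileFun F (p t i) < a i * x + b i := by
      linarith [(div_lt_iff₀ (ha i)).1 hi]
    have hle : p t i ≤ F (a i * x + b i) := by
      contrapose! hQ_lt
      exact le_quantileFun_of_apply_lt hF (hF_top.eventually_const_le hpi').exists hQ_lt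
    exact hci.trans_le (pow_le_pow_left₀ ((hF_nonneg y).trans hpi.le) hle _)
  · obtain ⟨t, htc, hxt⟩ : ∃ t, G t < c ∧ x < t :=
      ((hG.continuousWithinAt.eventually_lt_const hc).and (self_mem_nhdsWithin (s := Ioi x))).exists
    filter_upwards [(hQ t).eventually_const_lt hxt, (hpn t).eventually_lt_const htc, hp_gt t]
      with i hi hci hpi
    have hQ_gt : a i * x + b i < quantileFun F (p t i) := by
      linarith [(lt_div_iff₀ (ha i)).1 hi]
    have hle : F (a i * x + b i) ≤ p t i := by
      contrapose! hQ_gt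
      exact quantileFun_le_of_le_apply hF ⟨y, hpi⟩ hQ_gt.le
    exact (pow_le_pow_left₀ (hF_nonneg _) hle _).trans_lt hci

end InverseConvergence

section Levels

lemma tendsto_one_sub_mul_nhdsLT {x : ℝ} (hx : 0 < x) :
    Tendsto (fun s : ℝ => 1 - s * x) (𝓝[>] 0) (𝓝[<] 1) := by
  refine tendsto_nhdsWithin_iff.2 ⟨?_, ?_⟩
  · have h : Continuous fun s : ℝ => 1 - s * x := by fun_prop
    exact (h.tendsto' 0 1 (by simp)).mono_left nhdsWithin_le_nhds
  · filter_upwards [self_mem_nhdsWithin] with s hs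
    exact sub_lt_self 1 (mul_pos hs hx)

lemma tendsto_one_add_div_pow_floor_exp (x : ℝ) :
    Tendsto (fun T : ℝ => (1 + x / T) ^ ⌊T⌋₊) atTop (𝓝 (Real.exp x)) := by
  have h := (Real.tendsto_one_add_div_rpow_exp x).rpow (tendsto_nat_floor_div_atTop (R := ℝ))
    (Or.inl (Real.exp_pos x).ne')
  rw [Real.rpow_one] at h
  refine h.congr' ?_
  filter_upwards [eventually_gt_atTop 0, eventually_ge_atTop (-x)] with T hT hxT
  have hbase : 0 ≤ 1 + x / T := by
    rw [one_add_div hT.ne']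
    exact div_nonneg (by linarith) hT.le
  rw [← Real.rpow_mul hbase, mul_div_cancel₀ _ hT.ne', Real.rpow_natCast]

lemma tendsto_one_sub_mul_pow_floor_inv (x : ℝ) :
    Tendsto (fun s : ℝ => (1 - s * x) ^ ⌊s⁻¹⌋₊) (𝓝[>] 0) (𝓝 (Real.exp (-x))) := by
  refine ((tendsto_one_add_div_pow_floor_exp (-x)).comp tendsto_inv_nhdsGT_zero).congr fun s => ?_
  simp only [Function.comp_apply, div_inv_eq_mul]
  ring

end Levels

/-- The distribution function `Λ` of the standard Gumbel law. -/
def gumbelCDF (x : ℝ) : ℝ := Real.exp (-Real.exp (-x))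

lemma strictMono_gumbelCDF : StrictMono gumbelCDF := fun _ _ h =>
  Real.exp_lt_exp.2 (neg_lt_neg (Real.exp_lt_exp.2 (neg_lt_neg h)))

lemma continuous_gumbelCDF : Continuous gumbelCDF := by
  unfold gumbelCDF
  fun_prop

lemma gumbelCDF_neg_log {x : ℝ} (hx : 0 < x) : gumbelCDF (-Real.log x) = Real.exp (-x) := by
  rw [gumbelCDF, neg_neg, Real.exp_log hx]

lemma log_sub_log_ne_zero {x y : ℝ} (hx : 0 < x) (hy : 0 < y) (hxy : x ≠ y) :
    Real.log x - Real.log y ≠ 0 :=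
  sub_ne_zero.2 (Real.log_injOn_pos.ne hx hy hxy)

namespace DeHaanGumbel

variable {Q : ℝ → ℝ}

lemma of_tendsto_normalized {a b : ℝ → ℝ} (ha : ∀ s, a s ≠ 0)
    (h : ∀ x, 0 < x →
      Tendsto (fun s => (Q (1 - s * x) - b s) / a s) (𝓝[>] 0) (𝓝 (-Real.log x))) :
    DeHaanGumbel Q := by
  intro x y z w hx hy hz hw hyw
  have hlim (u v : ℝ) (hu : 0 < u) (hv : 0 < v) :
      Tendsto (fun s => (Q (1 - s * u) - Q (1 - s * v)) / a s) (𝓝[>] 0)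
        (𝓝 (-(Real.log u - Real.log v))) := by
    convert (h u hu).sub (h v hv) using 2 <;> ring
  have hratio := (hlim x z hx hz).div (hlim y w hy hw)
    (neg_ne_zero.2 (log_sub_log_ne_zero hy hw hyw))
  rw [neg_div_neg_eq] at hratio
  exact hratio.congr fun s => div_div_div_cancel_right₀ (ha s) _ _

lemma tendsto_normalized (hQ : DeHaanGumbel Q) {x : ℝ} (hx : 0 < x) :
    Tendsto (fun s => (Q (1 - s * x) - Q (1 - s)) / (Q (1 - s * Real.exp (-1)) - Q (1 - s)))
      (𝓝[>] 0) (𝓝 (-Real.log x)) := by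
  have hexp : Real.exp (-1) ≠ 1 := by simp
  simpa [div_neg] using hQ x (Real.exp (-1)) 1 1 hx (Real.exp_pos _) one_pos one_pos hexp

lemma eventually_lt (hQ : DeHaanGumbel Q) {c : ℝ} (hc : c < 1) (hmono : MonotoneOn Q (Ioo c 1))
    {x y : ℝ} (hx : 0 < x) (hxy : x < y) :
    ∀ᶠ s in 𝓝[>] 0, Q (1 - s * y) < Q (1 - s * x) := by
  have hy := hx.trans hxy
  have hmem (z : ℝ) (hz : 0 < z) : ∀ᶠ s in 𝓝[>] 0, 1 - s * z ∈ Ioo c 1 :=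
    tendsto_one_sub_mul_nhdsLT hz (Ioo_mem_nhdsLT hc)
  have hratio := hQ x x y y hx hx hy hy hxy.ne
  rw [div_self (log_sub_log_ne_zero hx hy hxy.ne)] at hratio
  -- The ratio tends to `1`, but a vanishing denominator would make it `0` since `u / 0 = 0`.
  filter_upwards [hratio.eventually_ne one_ne_zero, hmem x hx, hmem y hy, self_mem_nhdsWithin]
    with s hne hsx hsy hs
  have hle : Q (1 - s * y) ≤ Q (1 - s * x) :=
    hmono hsy hsx (sub_le_sub_left (mul_le_mul_of_nonneg_left hxy.le (le_of_lt hs)) 1)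
  exact hle.lt_of_ne' fun heq => hne (by rw [heq, sub_self, div_zero])

end DeHaanGumbel

lemma exists_forall_eventuallyEq {ι α : Type*} {l : Filter ι} {f : ι → α} {P : α → Prop}
    (hP : ∃ x, P x) (hf : ∀ᶠ i in l, P (f i)) : ∃ g : ι → α, (∀ i, P (g i)) ∧ g =ᶠ[l] f := by
  classical
  obtain ⟨x, hx⟩ := hP
  refine ⟨fun i => if P (f i) then f i else x, fun i => ?_, hf.mono fun i hi => if_pos hi⟩
  dsimp only
  split_ifs with hi
  exacts [hi, hx]

section GumbelDomain

variable {F : ℝ → ℝ}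

lemma deHaanGumbel_of_tendsto_pow (hF : Monotone F) (hF_nonneg : ∀ x, 0 ≤ F x)
    (hF_lt : ∃ y, F y < 1) (hF_top : Tendsto F atTop (𝓝 1)) {a b : ℕ → ℝ} (ha : ∀ n, 0 < a n)
    (h : ∀ x, Tendsto (fun n => F (a n * x + b n) ^ n) atTop (𝓝 (gumbelCDF x))) :
    DeHaanGumbel (quantileFun F) := by
  have hfloor : Tendsto (fun s : ℝ => ⌊s⁻¹⌋₊) (𝓝[>] 0) atTop :=
    tendsto_nat_floor_atTop.comp tendsto_inv_nhdsGT_zero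
  refine DeHaanGumbel.of_tendsto_normalized (a := fun s => a ⌊s⁻¹⌋₊) (b := fun s => b ⌊s⁻¹⌋₊)
    (fun s => (ha _).ne') fun x hx => ?_
  refine tendsto_quantileFun_normalized hF hF_nonneg hF_lt hF_top strictMono_gumbelCDF
    (fun _ => ha _) (fun t => (h t).comp hfloor) (tendsto_one_sub_mul_nhdsLT hx) ?_
  rw [gumbelCDF_neg_log hx]
  exact tendsto_one_sub_mul_pow_floor_inv x

lemma DeHaanGumbel.exists_tendsto_pow (hF : Monotone F) (hF_nonneg : ∀ x, 0 ≤ F x)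
    (hF_lt : ∃ y, F y < 1) (hF_top : Tendsto F atTop (𝓝 1))
    (hQ : DeHaanGumbel (quantileFun F)) :
    ∃ a b : ℕ → ℝ, (∀ n, 0 < a n) ∧
      ∀ x, Tendsto (fun n => F (a n * x + b n) ^ n) atTop (𝓝 (gumbelCDF x)) := by
  obtain ⟨y, hy⟩ := hF_lt
  have hinv : Tendsto (fun n : ℕ => (n : ℝ)⁻¹) atTop (𝓝[>] 0) :=
    tendsto_inv_atTop_nhdsGT_zero.comp tendsto_natCast_atTop_atTop
  have hscale_pos : ∀ᶠ n : ℕ in atTop, 0 < quantileFun F (1 - (n : ℝ)⁻¹ * Real.exp (-1)) -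
      quantileFun F (1 - (n : ℝ)⁻¹) := by
    have hlt := hQ.eventually_lt hy (quantileFun_monotoneOn hF hF_top y) (Real.exp_pos (-1))
      (y := 1) (by simp)
    simpa using hinv.eventually hlt
  obtain ⟨a, ha, ha_eq⟩ := exists_forall_eventuallyEq ⟨1, one_pos⟩ hscale_pos
  refine ⟨a, fun n => quantileFun F (1 - (n : ℝ)⁻¹), ha, fun x => ?_⟩
  refine tendsto_pow_of_tendsto_quantileFun_normalized hF hF_nonneg ⟨y, hy⟩ hF_top
    continuous_gumbelCDF.continuousAt ha (p := fun t n => 1 - (n : ℝ)⁻¹ * Real.exp (-t))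
    (fun t => (tendsto_one_sub_mul_nhdsLT (Real.exp_pos _)).comp hinv) (fun t => ?_) fun t => ?_
  · simpa [Function.comp_def, gumbelCDF] using
      (tendsto_one_sub_mul_pow_floor_inv (Real.exp (-t))).comp hinv
  · have hlim := (hQ.tendsto_normalized (Real.exp_pos (-t))).comp hinv
    rw [Real.log_exp, neg_neg] at hlim
    refine hlim.congr' ?_
    filter_upwards [ha_eq] with n hn
    simp only [Function.comp_apply, hn]

theorem gumbel_domain_iff_deHaan_general (hF : Monotone F) (hF_nonneg : ∀ x, 0 ≤ F x)
    (hF_lt : ∃ y, F y < 1) (hF_top : Tendsto F atTop (𝓝 1)) :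
    (∃ a b : ℕ → ℝ, (∀ n, 0 < a n) ∧
        ∀ x, Tendsto (fun n => F (a n * x + b n) ^ n) atTop (𝓝 (gumbelCDF x))) ↔
      DeHaanGumbel (quantileFun F) :=
  ⟨fun ⟨_, _, ha, h⟩ => deHaanGumbel_of_tendsto_pow hF hF_nonneg hF_lt hF_top ha h,
    DeHaanGumbel.exists_tendsto_pow hF hF_nonneg hF_lt hF_top⟩

end GumbelDomain

lemma distFun_eq_cdf (μ : Measure ℝ) [IsProbabilityMeasure μ] :
    distFun μ = ProbabilityTheory.cdf μ :=
  funext fun x => (ProbabilityTheory.cdf_eq_real μ x).symm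

/-- `F` is in the domain of attraction of the Gumbel law iff
de Haan's criterion holds for its quantile function. -/
theorem gumbel_domain_iff_deHaan
    (μ : Measure ℝ) [IsProbabilityMeasure μ] (F Q : ℝ → ℝ)
    (hF : F = distFun μ) (hQ : Q = quantileFun F) :
    (∃ a b : ℕ → ℝ, (∀ n : ℕ, 0 < a n) ∧
        ∀ x : ℝ, Tendsto (fun n : ℕ => (F (a n * x + b n)) ^ n) atTop
          (nhds (Real.exp (-Real.exp (-x))))) ↔
      DeHaanGumbel Q := by
  subst hQ
  rw [hF, distFun_eq_cdf]
  exact gumbel_domain_iff_deHaan_general (ProbabilityTheory.monotone_cdf μ)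
    (ProbabilityTheory.cdf_nonneg μ)
    ((ProbabilityTheory.tendsto_cdf_atBot μ).eventually_lt_const one_pos).exists
    (ProbabilityTheory.tendsto_cdf_atTop μ)
end
end

section
/- Suppose F ∈ D*(Λ): there exist s₀ ∈ (0,1), a ∈ ℝ, and a strictly positive measurable function r slowly varying at zero such that Q(1−s) = a + ∫_s^1 u^{−1} r(u) du for all 0 < s ≤ s₀ (the integral being finite). Then F ∈ D(Λ), i.e. Q satisfies de Haan's criterion: for every x, y, z, w > 0 with y ≠ w, (Q(1−sx) − Q(1−sz))/(Q(1−sy) − Q(1−sw)) → (log x − log z)/(log y − log w) as s ↓ 0. -/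
open MeasureTheory Filter Set

noncomputable section

/-!
In the variable `t = -log s` the criterion concerns the increments of `g t = Q (1 - exp (-t))`.
The measure `du / u` is invariant under dilations, so slow variation of `r` makes the increment of
`g` over `[t + l, t + l + c]` equivalent to the one over `[t, t + c]` as `t → ∞`. Cutting intervals
of rational length into equal pieces, the increment over `[t, t + c]` is equivalent to `c` times the
one over `[t, t + 1]` for rational `c ≠ 0`, and monotonicity of `g` extends this to real `c`.
-/

open Asymptotics
open scoped Topology fwdDiff

section MonotoneLimit

variable {ι X Y : Type*} [TopologicalSpace X] [LinearOrder X] [OrderTopology X] [DenselyOrdered X]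
  [NoMinOrder X] [NoMaxOrder X] [TopologicalSpace Y] [LinearOrder Y] [OrderTopology Y]

theorem tendsto_of_tendsto_dense_of_eventually_le {k : Filter ι} {f : ι → X → Y} {φ : X → Y}
    {s : Set X} {c : X} (hs : Dense s) (hmono : ∀ c d, c < d → ∀ᶠ i in k, f i c ≤ f i d)
    (hlim : ∀ q ∈ s, Tendsto (f · q) k (𝓝 (φ q))) (hφ : ContinuousAt φ c) :
    Tendsto (f · c) k (𝓝 (φ c)) := by
  refine tendsto_order.2 ⟨fun y hy => ?_, fun y hy => ?_⟩
  · obtain ⟨p, hpc, hp⟩ := exists_Ioc_subset_of_mem_nhds (hφ.eventually_const_lt hy) (exists_lt c)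
    obtain ⟨q, hqs, hpq, hqc⟩ := hs.exists_between hpc
    filter_upwards [(hlim q hqs).eventually_const_lt (hp ⟨hpq, hqc.le⟩), hmono q c hqc]
      with i hi hle using hi.trans_le hle
  · obtain ⟨p, hcp, hp⟩ := exists_Ico_subset_of_mem_nhds (hφ.eventually_lt_const hy) (exists_gt c)
    obtain ⟨q, hqs, hcq, hqp⟩ := hs.exists_between hcp
    filter_upwards [(hlim q hqs).eventually_lt_const (hp ⟨hcq.le, hqp⟩), hmono c q hcq]
      with i hi hle using hle.trans_lt hi

end MonotoneLimit

section Increments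

theorem tendsto_fwdDiff_zsmul_div {M 𝕜 : Type*} [AddCommGroup M] [NormedField 𝕜] {l : Filter M}
    {g : M → 𝕜} {d : M} (hne : ∀ᶠ t in l, Δ_[d] g t ≠ 0)
    (htrans : ∀ e, (fun t => Δ_[d] g (t + e)) ~[l] Δ_[d] g) (n : ℤ) :
    Tendsto (fun t => Δ_[n • d] g t / Δ_[d] g t) l (𝓝 n) := by
  have hone (e : M) : Tendsto (fun t => Δ_[d] g (t + e) / Δ_[d] g t) l (𝓝 1) :=
    (isEquivalent_iff_tendsto_one hne).1 (htrans e)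
  have hstep (m : ℤ) (t : M) : Δ_[(m + 1) • d] g t = Δ_[m • d] g t + Δ_[d] g (t + m • d) := by
    simp only [fwdDiff, add_smul, one_smul, add_assoc]
    abel
  induction n using Int.induction_on with
  | zero => simpa [fwdDiff] using tendsto_const_nhds
  | succ n ih =>
    simpa only [hstep, add_div, Int.cast_add, Int.cast_one] using ih.add (hone _)
  | pred n ih =>
    have hstep' (t : M) : Δ_[(-n - 1 : ℤ) • d] g t =
        Δ_[(-n : ℤ) • d] g t - Δ_[d] g (t + (-n - 1 : ℤ) • d) := by
      rw [eq_sub_iff_add_eq, ← hstep, sub_add_cancel]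
    simpa only [hstep', sub_div, Int.cast_sub, Int.cast_one] using ih.sub (hone _)

variable {g : ℝ → ℝ} (hpos : ∀ c, 0 < c → ∀ᶠ t in atTop, 0 < Δ_[c] g t)
  (htrans : ∀ c l, 0 < c → (fun t => Δ_[c] g (t + l)) ~[atTop] Δ_[c] g)
include hpos htrans

theorem tendsto_fwdDiff_ratCast_div_fwdDiff_one (q : ℚ) :
    Tendsto (fun t => Δ_[(q : ℝ)] g t / Δ_[1] g t) atTop (𝓝 q) := by
  have hden : (q.den : ℝ) ≠ 0 := Nat.cast_ne_zero.2 q.den_ne_zero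
  set d : ℝ := (q.den : ℝ)⁻¹ with hd
  have hd_pos : 0 < d := by positivity
  have hne : ∀ᶠ t in atTop, Δ_[d] g t ≠ 0 := (hpos d hd_pos).mono fun _ => ne_of_gt
  have hlim (n : ℤ) := tendsto_fwdDiff_zsmul_div hne (fun l => htrans d l hd_pos) n
  have hq : q.num • d = q := by rw [zsmul_eq_mul, hd, ← div_eq_mul_inv, ← Rat.cast_def]
  have hone : (q.den : ℤ) • d = 1 := by simp [hd, hden]
  have hquot := (hlim q.num).div (hlim q.den) (by simp)
  rw [hq, hone, Int.cast_natCast, ← Rat.cast_def] at hquot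
  refine hquot.congr' (hne.mono fun t ht => ?_)
  exact div_div_div_cancel_right₀ ht _ _

theorem tendsto_fwdDiff_div_fwdDiff_one (c : ℝ) :
    Tendsto (fun t => Δ_[c] g t / Δ_[1] g t) atTop (𝓝 c) := by
  refine tendsto_of_tendsto_dense_of_eventually_le (f := fun t c => Δ_[c] g t / Δ_[1] g t)
    (φ := id) Rat.denseRange_cast (fun c d hcd => ?_)
    (forall_mem_range.2 (tendsto_fwdDiff_ratCast_div_fwdDiff_one hpos htrans)) continuousAt_id
  filter_upwards [hpos 1 one_pos,
    (tendsto_atTop_add_const_right _ c tendsto_id).eventually (hpos (d - c) (sub_pos.2 hcd))]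
    with t hone hdiff
  have hsub : Δ_[d - c] g (t + c) = Δ_[d] g t - Δ_[c] g t := by simp [fwdDiff]
  gcongr
  exact (sub_pos.1 (hsub ▸ hdiff)).le

theorem tendsto_sub_div_sub_of_fwdDiff_isEquivalent {x y z w : ℝ} (hyw : y ≠ w) :
    Tendsto (fun t => (g (t + x) - g (t + z)) / (g (t + y) - g (t + w))) atTop
      (𝓝 ((x - z) / (y - w))) := by
  have hlim := tendsto_fwdDiff_div_fwdDiff_one hpos htrans
  refine (((hlim x).sub (hlim z)).div ((hlim y).sub (hlim w)) (sub_ne_zero.2 hyw)).congr' ?_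
  filter_upwards [hpos 1 one_pos] with t ht
  simp only [Pi.div_apply, ← sub_div, div_div_div_cancel_right₀ ht.ne']
  simp only [fwdDiff, sub_sub_sub_cancel_right]

end Increments

section IntervalIntegral

variable {ι E F : Type*} [NormedAddCommGroup E] [NormedSpace ℝ E] [NormedAddCommGroup F]
  {l : Filter ℝ} {k : Filter ι} {α β : ι → ℝ} {μ : Measure ℝ}

theorem integral_inv_smul_comp_mul_left {c : ℝ} (hc : c ≠ 0) (f : ℝ → E) (a b : ℝ) :
    ∫ u in a..b, u⁻¹ • f (c * u) = ∫ u in c * a..c * b, u⁻¹ • f u := by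
  rw [← intervalIntegral.smul_integral_comp_mul_left, ← intervalIntegral.integral_smul]
  simp only [smul_smul, mul_inv, mul_inv_cancel_left₀ hc]

theorem intervalIntegrable_inv_smul_comp_mul_left {c : ℝ} (hc : c ≠ 0) {f : ℝ → E} {a b : ℝ}
    (hf : IntervalIntegrable (fun u => u⁻¹ • f u) volume (c * a) (c * b)) :
    IntervalIntegrable (fun u => u⁻¹ • f (c * u)) volume a b := by
  have h := (hf.comp_mul_left (c := c)).smul c
  simpa only [mul_div_cancel_left₀ _ hc, Pi.smul_def, smul_smul, mul_inv, mul_inv_cancel_left₀ hc]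
    using h

theorem isLittleO_intervalIntegral [TendstoIxxClass Icc l l] {f : ℝ → E} {g : ℝ → F}
    (hfg : f =o[l] g) (hα : Tendsto α k l) (hβ : Tendsto β k l)
    (hg : ∀ᶠ i in k, IntervalIntegrable (‖g ·‖) μ (α i) (β i)) :
    (fun i => ∫ u in α i..β i, f u ∂μ) =o[k] fun i => ∫ u in α i..β i, ‖g u‖ ∂μ := by
  refine isLittleO_iff.2 fun ε hε => ?_
  have hbound := (hα.uIcc hβ).eventually (eventually_smallSets_forall.2 (hfg.bound hε))
  filter_upwards [hbound, hg] with i hi hgi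
  calc ‖∫ u in α i..β i, f u ∂μ‖
    _ ≤ |∫ u in α i..β i, ε * ‖g u‖ ∂μ| :=
      intervalIntegral.norm_integral_le_abs_of_norm_le
        (ae_restrict_of_forall_mem measurableSet_uIoc fun u hu => hi u (uIoc_subset_uIcc hu))
        (hgi.const_mul ε)
    _ = ε * ‖∫ u in α i..β i, ‖g u‖ ∂μ‖ := by
      rw [intervalIntegral.integral_const_mul, abs_mul, abs_of_pos hε, Real.norm_eq_abs]

theorem isEquivalent_intervalIntegral [TendstoIxxClass Icc l l] {f g : ℝ → ℝ} (hfg : f ~[l] g)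
    (hg_nonneg : ∀ᶠ u in l, 0 ≤ g u) (hα : Tendsto α k l) (hβ : Tendsto β k l)
    (hf : ∀ᶠ i in k, IntervalIntegrable f μ (α i) (β i))
    (hg : ∀ᶠ i in k, IntervalIntegrable g μ (α i) (β i)) :
    (fun i => ∫ u in α i..β i, f u ∂μ) ~[k] fun i => ∫ u in α i..β i, g u ∂μ := by
  refine (isLittleO_intervalIntegral hfg.isLittleO hα hβ (hg.mono fun _ h => h.norm)).congr' ?_ ?_
  · filter_upwards [hf, hg] with i hfi hgi using intervalIntegral.integral_sub hfi hgi
  · filter_upwards [(hα.uIcc hβ).eventually (eventually_smallSets_forall.2 hg_nonneg)] with i hi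
    exact intervalIntegral.integral_congr fun u hu => Real.norm_of_nonneg (hi u hu)

omit [NormedSpace ℝ E] in
theorem eventually_intervalIntegrable {f : ℝ → E} {b : ℝ} (hα : Tendsto α k l)
    (hβ : Tendsto β k l) (hf : ∀ᶠ s in l, IntervalIntegrable f μ s b) :
    ∀ᶠ i in k, IntervalIntegrable f μ (α i) (β i) := by
  filter_upwards [hα.eventually hf, hβ.eventually hf] with i hfα hfβ using hfα.trans hfβ.symm

theorem eventually_sub_eq_integral {U f : ℝ → E} {a : E} {b : ℝ} (hα : Tendsto α k l)
    (hβ : Tendsto β k l) (hf : ∀ᶠ s in l, IntervalIntegrable f μ s b)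
    (hU : ∀ᶠ s in l, U s = a + ∫ u in s..b, f u ∂μ) :
    ∀ᶠ i in k, U (α i) - U (β i) = ∫ u in α i..β i, f u ∂μ := by
  filter_upwards [hα.eventually hf, hβ.eventually hf, hα.eventually hU, hβ.eventually hU]
    with i hfα hfβ hUα hUβ
  rw [hUα, hUβ, add_sub_add_left_eq_sub, sub_eq_iff_eq_add,
    intervalIntegral.integral_add_adjacent_intervals (hfα.trans hfβ.symm) hfβ]

theorem eventually_intervalIntegral_pos [TendstoIxxClass Icc l l] {f : ℝ → ℝ}
    (hf : ∀ᶠ u in l, 0 < f u) (hα : Tendsto α k l) (hβ : Tendsto β k l)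
    (hint : ∀ᶠ i in k, IntervalIntegrable f volume (α i) (β i)) (hlt : ∀ᶠ i in k, α i < β i) :
    ∀ᶠ i in k, 0 < ∫ u in α i..β i, f u := by
  filter_upwards [(hα.Icc hβ).eventually (eventually_smallSets_forall.2 hf), hint, hlt]
    with i hpos hi hlt_i
  exact intervalIntegral.intervalIntegral_pos_of_pos_on hi
    (fun u hu => hpos u (Ioo_subset_Icc_self hu)) hlt_i

end IntervalIntegral

section SlowVariation

variable {ι : Type*} {k : Filter ι} {r : ℝ → ℝ} {α β : ι → ℝ} {b : ℝ}

theorem eventually_inv_mul_pos (hpos : ∀ᶠ s in 𝓝[>] 0, 0 < r s) :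
    ∀ᶠ s in 𝓝[>] 0, 0 < s⁻¹ * r s := by
  filter_upwards [hpos, self_mem_nhdsWithin] with s hrs hs using mul_pos (inv_pos.2 hs) hrs

theorem SlowlyVaryingAtZero.isEquivalent_integral_inv_mul (hr : SlowlyVaryingAtZero r)
    (hpos : ∀ᶠ s in 𝓝[>] 0, 0 < r s)
    (hint : ∀ᶠ s in 𝓝[>] 0, IntervalIntegrable (fun u => u⁻¹ * r u) volume s b)
    {c : ℝ} (hc : 0 < c) (hα : Tendsto α k (𝓝[>] 0)) (hβ : Tendsto β k (𝓝[>] 0)) :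
    (fun i => ∫ u in c * α i..c * β i, u⁻¹ * r u) ~[k] fun i => ∫ u in α i..β i, u⁻¹ * r u := by
  have hequiv : (fun u => u⁻¹ * r (c * u)) ~[𝓝[>] 0] fun u => u⁻¹ * r u :=
    IsEquivalent.refl.mul
      ((isEquivalent_iff_tendsto_one (hpos.mono fun _ => ne_of_gt)).2 (hr c hc))
  have hmul : Tendsto (c * ·) (𝓝[>] 0) (𝓝[>] 0) :=
    fun _ => eventually_nhdsGT_zero_mul_left hc
  have hdilate (i : ι) :
      ∫ u in c * α i..c * β i, u⁻¹ * r u = ∫ u in α i..β i, u⁻¹ * r (c * u) :=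
    (integral_inv_smul_comp_mul_left hc.ne' r (α i) (β i)).symm
  simp only [hdilate]
  exact isEquivalent_intervalIntegral hequiv ((eventually_inv_mul_pos hpos).mono fun _ => le_of_lt)
    hα hβ
    ((eventually_intervalIntegrable (hmul.comp hα) (hmul.comp hβ) hint).mono fun _ =>
      intervalIntegrable_inv_smul_comp_mul_left hc.ne')
    (eventually_intervalIntegrable hα hβ hint)

end SlowVariation

section LogarithmicScale

theorem tendsto_exp_neg_nhdsGT_zero : Tendsto (fun t => Real.exp (-t)) atTop (𝓝[>] 0) :=
  Real.tendsto_exp_atBot_nhdsGT.comp tendsto_neg_atTop_atBot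

theorem tendsto_exp_neg_add_nhdsGT_zero (c : ℝ) :
    Tendsto (fun t => Real.exp (-(t + c))) atTop (𝓝[>] 0) :=
  tendsto_exp_neg_nhdsGT_zero.comp (tendsto_atTop_add_const_right _ c tendsto_id)

theorem deHaanGumbel_of_tendsto_sub_div_sub {Q : ℝ → ℝ} (hQ : ∀ x y z w : ℝ, y ≠ w →
      Tendsto (fun t => (Q (1 - Real.exp (-(t + x))) - Q (1 - Real.exp (-(t + z)))) /
          (Q (1 - Real.exp (-(t + y))) - Q (1 - Real.exp (-(t + w))))) atTop
        (𝓝 ((x - z) / (y - w)))) :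
    DeHaanGumbel Q := by
  intro x y z w hx hy hz hw hyw
  have hlog : -Real.log y ≠ -Real.log w := fun h =>
    hyw (Real.log_injOn_pos hy hw (neg_injective h))
  have hlim := (hQ (-Real.log x) (-Real.log y) (-Real.log z) (-Real.log w) hlog).comp
    (tendsto_neg_atBot_atTop.comp Real.tendsto_log_nhdsGT_zero)
  rw [neg_sub_neg, neg_sub_neg, ← neg_sub (Real.log x), ← neg_sub (Real.log y),
    neg_div_neg_eq] at hlim
  refine hlim.congr' ?_
  filter_upwards [self_mem_nhdsWithin] with s hs
  have hexp {v : ℝ} (hv : 0 < v) : Real.exp (-(-Real.log s + -Real.log v)) = s * v := by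
    rw [← neg_add, neg_neg, ← Real.log_mul (ne_of_gt hs) hv.ne', Real.exp_log (mul_pos hs hv)]
  simp only [Function.comp_apply, hexp hx, hexp hy, hexp hz, hexp hw]

variable {U r : ℝ → ℝ} {a b : ℝ}
  (hint : ∀ᶠ s in 𝓝[>] 0, IntervalIntegrable (fun u => u⁻¹ * r u) volume s b)
  (hU : ∀ᶠ s in 𝓝[>] 0, U s = a + ∫ u in s..b, u⁻¹ * r u)
include hint hU

theorem eventually_fwdDiff_eq_integral (c : ℝ) :
    ∀ᶠ t in atTop, Δ_[c] (fun t => U (Real.exp (-t))) t =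
      ∫ u in Real.exp (-(t + c))..Real.exp (-t), u⁻¹ * r u :=
  eventually_sub_eq_integral (tendsto_exp_neg_add_nhdsGT_zero c) tendsto_exp_neg_nhdsGT_zero hint hU

theorem eventually_fwdDiff_pos (hpos : ∀ᶠ s in 𝓝[>] 0, 0 < r s) {c : ℝ} (hc : 0 < c) :
    ∀ᶠ t in atTop, 0 < Δ_[c] (fun t => U (Real.exp (-t))) t := by
  have hlt (t : ℝ) : Real.exp (-(t + c)) < Real.exp (-t) := Real.exp_lt_exp.2 (by linarith)
  have hleft := tendsto_exp_neg_add_nhdsGT_zero c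
  filter_upwards [eventually_fwdDiff_eq_integral hint hU c,
    eventually_intervalIntegral_pos (eventually_inv_mul_pos hpos) hleft tendsto_exp_neg_nhdsGT_zero
      (eventually_intervalIntegrable hleft tendsto_exp_neg_nhdsGT_zero hint) (.of_forall hlt)]
    with t heq hgt using heq ▸ hgt

theorem fwdDiff_isEquivalent_of_slowlyVarying (hr : SlowlyVaryingAtZero r)
    (hpos : ∀ᶠ s in 𝓝[>] 0, 0 < r s) (c l : ℝ) :
    (fun t => Δ_[c] (fun t => U (Real.exp (-t))) (t + l)) ~[atTop]
      Δ_[c] fun t => U (Real.exp (-t)) := by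
  have hincr : Δ_[c] (fun t => U (Real.exp (-t))) =ᶠ[atTop] _ :=
    eventually_fwdDiff_eq_integral hint hU c
  have hincr_shift : (fun t => Δ_[c] (fun t => U (Real.exp (-t))) (t + l)) =ᶠ[atTop]
      fun t => ∫ u in Real.exp (-l) * Real.exp (-(t + c))..Real.exp (-l) * Real.exp (-t),
        u⁻¹ * r u := by
    filter_upwards [(tendsto_atTop_add_const_right _ l tendsto_id).eventually hincr] with t ht
    rw [id_eq] at ht
    rw [ht, ← Real.exp_add, ← Real.exp_add]
    ring_nf
  exact hincr_shift.trans_isEquivalent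
    ((hr.isEquivalent_integral_inv_mul hpos hint (Real.exp_pos (-l))
      (tendsto_exp_neg_add_nhdsGT_zero c) tendsto_exp_neg_nhdsGT_zero).trans_eventuallyEq
        hincr.symm)

end LogarithmicScale

theorem deHaan_of_Dstar_general {Q r : ℝ → ℝ} {a b : ℝ} (hrpos : ∀ᶠ s in 𝓝[>] 0, 0 < r s)
    (hrsv : SlowlyVaryingAtZero r)
    (hrint : ∀ᶠ s in 𝓝[>] 0, IntervalIntegrable (fun u => u⁻¹ * r u) volume s b)
    (hrep : ∀ᶠ s in 𝓝[>] 0, Q (1 - s) = a + ∫ u in s..b, u⁻¹ * r u) :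
    DeHaanGumbel Q :=
  deHaanGumbel_of_tendsto_sub_div_sub fun _ _ _ _ hyw =>
    tendsto_sub_div_sub_of_fwdDiff_isEquivalent (g := fun t => Q (1 - Real.exp (-t)))
      (fun _ hc => eventually_fwdDiff_pos hrint (U := fun s => Q (1 - s)) hrep hrpos hc)
      (fun c l _ =>
        fwdDiff_isEquivalent_of_slowlyVarying hrint (U := fun s => Q (1 - s)) hrep hrsv hrpos c l)
      hyw

/-- `F ∈ D*(Λ)` implies `F ∈ D(Λ)`: if `Q(1-s) = a + ∫_s^1 u⁻¹ r(u) du`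
near `0` with `r` strictly positive, measurable and slowly varying at zero, then `Q`
satisfies de Haan's criterion. -/
theorem deHaan_of_Dstar
    (μ : Measure ℝ) [IsProbabilityMeasure μ] (F Q : ℝ → ℝ)
    (hF : F = distFun μ) (hQ : Q = quantileFun F)
    (s₀ a : ℝ) (hs₀ : s₀ ∈ Set.Ioo (0:ℝ) 1) (r : ℝ → ℝ)
    (hrmeas : Measurable r) (hrpos : ∀ s ∈ Set.Ioo (0:ℝ) 1, 0 < r s)
    (hrsv : SlowlyVaryingAtZero r)
    (hrint : ∀ s : ℝ, 0 < s → s ≤ s₀ →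
      IntervalIntegrable (fun u : ℝ => u⁻¹ * r u) volume s 1)
    (hrep : ∀ s : ℝ, 0 < s → s ≤ s₀ → Q (1 - s) = a + ∫ u in s..1, u⁻¹ * r u)
 :
    DeHaanGumbel Q := by
  have hnear : ∀ᶠ s in 𝓝[>] (0 : ℝ), s ∈ Ioc 0 s₀ := Ioc_mem_nhdsGT hs₀.1
  exact deHaan_of_Dstar_general (mem_of_superset (Ioo_mem_nhdsGT one_pos) hrpos) hrsv
    (hnear.mono fun s hs => hrint s hs.1 hs.2) (hnear.mono fun s hs => hrep s hs.1 hs.2)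
end
end
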